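/- The set of sextuples (q_0,…,q_5) of homogeneous quadratic forms in ℂ[X_0,…,X_4] for which the ℂ-linear map (r_0,…,r_5) ↦ Σ_{i=0}^{5} q_i·r_i, from sextuples of homogeneous quadratic forms to homogeneous quartic forms, is surjective, is nonempty, and its complement is contained in the zero locus of a nonzero polynomial function on the space of sextuples of quadratic forms; in particular this set is Zariski-dense. -/

import Mathlib

open MvPolynomial

/-!
At the special sextuple `(X₀², X₁², X₂², X₃², X₄², X₀X₁ + X₂X₃)` every quartic monomial is in the
image: a monomial that is not squarefree is divisible by some `Xᵢ²`, and each of the five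
squarefree ones is a product of `X₀X₁ + X₂X₃` with a quadratic monomial, up to a multiple of some
`Xᵢ²` (`exists_preimage_monomial`).

Fix for each quartic monomial `e` a preimage `R e` under the special map, and for any sextuple `q`
let `N(q)` be the square matrix whose column `e` lists the coefficients of `∑ qᵢ (R e)ᵢ`. Its
entries are linear in the coefficients of `q`, so `G = det N` is a polynomial function. It takes
the value `1` at the special sextuple, hence is nonzero, and wherever `det N(q) ≠ 0` the quartics
`∑ qᵢ (R e)ᵢ` span all quartic forms, so the map is surjective (`surjSextuple_of_det_ne_zero`).
-/

/-- `SurjSextuple q` says that the `ℂ`-linear map `(r₀,…,r₅) ↦ ∑ qᵢ rᵢ` from sextuples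
of homogeneous quadratic forms to homogeneous quartic forms in `ℂ[X₀,…,X₄]` is
surjective. -/
def SurjSextuple (q : Fin 6 → MvPolynomial (Fin 5) ℂ) : Prop :=
  ∀ f : MvPolynomial (Fin 5) ℂ, f.IsHomogeneous 4 →
    ∃ r : Fin 6 → MvPolynomial (Fin 5) ℂ,
      (∀ i, (r i).IsHomogeneous 2) ∧ f = ∑ i, q i * r i

/-- Exponent vectors of the monomials of total degree `n` in five variables. -/
abbrev Expo (n : ℕ) : Type := {d : Fin 5 →₀ ℕ // ∑ i : Fin 5, d i = n}

instance finite_expo (n : ℕ) : Finite (Expo n) :=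
  Set.Finite.to_subtype <|
    ((Finset.univ : Finset (Fin 5)).finsuppAntidiag n).finite_toSet.subset fun _ hd =>
      Finset.mem_finsuppAntidiag.2 ⟨hd, Finset.subset_univ _⟩

noncomputable instance fintype_expo (n : ℕ) : Fintype (Expo n) := Fintype.ofFinite _

theorem coeff_eq_zero_of_sum_ne {n : ℕ} {p : MvPolynomial (Fin 5) ℂ} (hp : p.IsHomogeneous n)
    {d : Fin 5 →₀ ℕ} (hd : ∑ i : Fin 5, d i ≠ n) : p.coeff d = 0 :=
  hp.coeff_eq_zero (by rwa [Finsupp.degree_eq_sum])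

/-- The sextuple at which surjectivity is checked by hand. -/
noncomputable def specialSextuple : Fin 6 → MvPolynomial (Fin 5) ℂ :=
  ![X 0 ^ 2, X 1 ^ 2, X 2 ^ 2, X 3 ^ 2, X 4 ^ 2, X 0 * X 1 + X 2 * X 3]

theorem isHomogeneous_X_mul_X (i j : Fin 5) :
    (X i * X j : MvPolynomial (Fin 5) ℂ).IsHomogeneous 2 :=
  (isHomogeneous_X ℂ i).mul (isHomogeneous_X ℂ j)

theorem isHomogeneous_specialSextuple (i : Fin 6) : (specialSextuple i).IsHomogeneous 2 := by
  have hsq (j : Fin 5) : (X j ^ 2 : MvPolynomial (Fin 5) ℂ).IsHomogeneous 2 :=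
    isHomogeneous_X_pow j 2
  fin_cases i
  exacts [hsq 0, hsq 1, hsq 2, hsq 3, hsq 4,
    (isHomogeneous_X_mul_X 0 1).add (isHomogeneous_X_mul_X 2 3)]

theorem specialSextuple_castSucc (i : Fin 5) : specialSextuple i.castSucc = X i ^ 2 := by
  fin_cases i <;> rfl

/-- A squarefree quartic monomial omits one variable; for suitable indices it equals
`(X₀X₁ + X₂X₃) XₐX_b - Xᵢ² XⱼXₖ`, which exhibits a preimage of it. -/
theorem exists_preimage_of_correction {m : MvPolynomial (Fin 5) ℂ} (a b i j k : Fin 5)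
    (h : m = (X 0 * X 1 + X 2 * X 3) * (X a * X b) - X i ^ 2 * (X j * X k)) :
    ∃ r : Fin 6 → MvPolynomial (Fin 5) ℂ,
      (∀ i, (r i).IsHomogeneous 2) ∧ ∑ i, specialSextuple i * r i = m := by
  refine ⟨Fin.snoc (α := fun _ => MvPolynomial (Fin 5) ℂ)
    (Pi.single i (-(X j * X k))) (X a * X b), ?_, ?_⟩
  · intro l
    refine Fin.lastCases ?_ (fun l => ?_) l
    · rw [Fin.snoc_last]
      exact isHomogeneous_X_mul_X a b
    · rw [Fin.snoc_castSucc]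
      by_cases hl : l = i
      · subst hl
        simpa using (isHomogeneous_X_mul_X j k).neg
      · simpa [hl] using isHomogeneous_zero _ _ _
  · have hlast : specialSextuple (Fin.last 5) = X 0 * X 1 + X 2 * X 3 := rfl
    rw [Fin.sum_univ_castSucc]
    simp only [Fin.snoc_castSucc, Fin.snoc_last, specialSextuple_castSucc, hlast, Pi.single_apply,
      mul_ite, mul_zero, Finset.sum_ite_eq', Finset.mem_univ, if_true]
    rw [h]
    ring

theorem exists_preimage_monomial (e : Expo 4) :
    ∃ r : Fin 6 → MvPolynomial (Fin 5) ℂ,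
      (∀ i, (r i).IsHomogeneous 2) ∧ ∑ i, specialSextuple i * r i = monomial e.1 1 := by
  obtain ⟨d, hd⟩ := e
  by_cases h : ∃ i, 2 ≤ d i
  · obtain ⟨i, hi⟩ := h
    have hle : Finsupp.single i 2 ≤ d := Finsupp.single_le_iff.2 hi
    have hadd : Finsupp.single i 2 + (d - Finsupp.single i 2) = d := add_tsub_cancel_of_le hle
    refine ⟨Pi.single i.castSucc (monomial (d - Finsupp.single i 2) 1), fun l => ?_, ?_⟩
    · by_cases hl : l = i.castSucc
      · subst hl
        rw [Pi.single_eq_same]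
        refine isHomogeneous_monomial _ ?_
        have := congrArg Finsupp.degree hadd
        rw [map_add, Finsupp.degree_single, Finsupp.degree_eq_sum d, hd] at this
        omega
      · rw [Pi.single_eq_of_ne hl]
        exact isHomogeneous_zero _ _ _
    · simp only [Pi.single_apply, mul_ite, mul_zero, Finset.sum_ite_eq', Finset.mem_univ, if_true,
        specialSextuple_castSucc]
      rw [X_pow_eq_monomial, monomial_mul, hadd, one_mul]
  · push Not at h
    have hm : (monomial d 1 : MvPolynomial (Fin 5) ℂ)
        = X 0 ^ d 0 * X 1 ^ d 1 * X 2 ^ d 2 * X 3 ^ d 3 * X 4 ^ d 4 := by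
      rw [monomial_eq, Finsupp.prod_fintype _ _ (by simp), Fin.prod_univ_five, C_1, one_mul]
    rw [Fin.sum_univ_five] at hd
    have h0 := h 0
    have h1 := h 1
    have h2 := h 2
    have h3 := h 3
    have h4 := h 4
    simp only [hm]
    -- one case for each omitted variable, `X₀` first
    obtain h | h | h | h | h :
        (d 0 = 0 ∧ d 1 = 1 ∧ d 2 = 1 ∧ d 3 = 1 ∧ d 4 = 1) ∨
        (d 0 = 1 ∧ d 1 = 0 ∧ d 2 = 1 ∧ d 3 = 1 ∧ d 4 = 1) ∨
        (d 0 = 1 ∧ d 1 = 1 ∧ d 2 = 0 ∧ d 3 = 1 ∧ d 4 = 1) ∨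
        (d 0 = 1 ∧ d 1 = 1 ∧ d 2 = 1 ∧ d 3 = 0 ∧ d 4 = 1) ∨
        (d 0 = 1 ∧ d 1 = 1 ∧ d 2 = 1 ∧ d 3 = 1 ∧ d 4 = 0) := by omega
    all_goals
      obtain ⟨e0, e1, e2, e3, e4⟩ := h
      simp only [e0, e1, e2, e3, e4]
    · exact exists_preimage_of_correction 1 4 1 0 4 (by ring)
    · exact exists_preimage_of_correction 0 4 0 1 4 (by ring)
    · exact exists_preimage_of_correction 3 4 3 2 4 (by ring)
    · exact exists_preimage_of_correction 2 4 2 3 4 (by ring)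
    · exact exists_preimage_of_correction 0 1 0 1 1 (by ring)

/-- The matrix `N(q)`: column `e` holds the coefficients, at the quartic monomials, of
`∑ qᵢ (R e)ᵢ`. The coefficient ring is arbitrary so that `q` may also be the generic sextuple. -/
noncomputable def prodMatrix {A : Type*} [CommRing A] (R : Expo 4 → Fin 6 → MvPolynomial (Fin 5) A)
    (q : Fin 6 → MvPolynomial (Fin 5) A) : Matrix (Expo 4) (Expo 4) A :=
  Matrix.of fun e' e => (∑ i, q i * R e i).coeff e'.1

theorem surjSextuple_of_det_ne_zero {R : Expo 4 → Fin 6 → MvPolynomial (Fin 5) ℂ}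
    (hR : ∀ e i, (R e i).IsHomogeneous 2) {q : Fin 6 → MvPolynomial (Fin 5) ℂ}
    (hq : ∀ i, (q i).IsHomogeneous 2) (hdet : (prodMatrix R q).det ≠ 0) : SurjSextuple q := by
  intro f hf
  set w : Expo 4 → ℂ := (prodMatrix R q)⁻¹.mulVec fun e => f.coeff e.1 with hw
  have hNw : (prodMatrix R q).mulVec w = fun e => f.coeff e.1 := by
    rw [hw, Matrix.mulVec_mulVec, Matrix.mul_nonsing_inv _ (isUnit_iff_ne_zero.2 hdet),
      Matrix.one_mulVec]
  have hr (i : Fin 6) : (∑ e, C (w e) * R e i).IsHomogeneous 2 :=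
    IsHomogeneous.sum _ _ _ fun e _ => (hR e i).C_mul _
  refine ⟨fun i => ∑ e, C (w e) * R e i, hr, ?_⟩
  have hsum : ∑ i, q i * ∑ e, C (w e) * R e i = ∑ e, C (w e) * ∑ i, q i * R e i := by
    simp only [Finset.mul_sum]
    rw [Finset.sum_comm]
    exact Finset.sum_congr rfl fun _ _ => Finset.sum_congr rfl fun _ _ => by ring
  ext d
  by_cases hd : ∑ i : Fin 5, d i = 4
  · have := congrFun hNw ⟨d, hd⟩
    rw [hsum, coeff_sum]
    simp only [coeff_C_mul]
    rw [← this]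
    simp only [Matrix.mulVec, dotProduct, prodMatrix, Matrix.of_apply]
    exact Finset.sum_congr rfl fun _ _ => mul_comm _ _
  · rw [coeff_eq_zero_of_sum_ne hf hd, coeff_eq_zero_of_sum_ne _ hd]
    exact IsHomogeneous.sum _ _ _ fun i _ => (hq i).mul (hr i)

/-- The generic sextuple of quadratic forms, with indeterminate coefficients. -/
noncomputable def genericSextuple (i : Fin 6) :
    MvPolynomial (Fin 5) (MvPolynomial (Fin 6 × Expo 2) ℂ) :=
  ∑ m : Expo 2, monomial m.1 (X (i, m))

theorem map_eval_genericSextuple {q : Fin 6 → MvPolynomial (Fin 5) ℂ}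
    (hq : ∀ i, (q i).IsHomogeneous 2) (i : Fin 6) :
    map (eval fun m : Fin 6 × Expo 2 => (q m.1).coeff m.2.val) (genericSextuple i) = q i := by
  ext d
  simp only [genericSextuple, map_sum, map_monomial, eval_X, coeff_sum, coeff_monomial]
  by_cases hd : ∑ i : Fin 5, d i = 2
  · rw [Finset.sum_eq_single ⟨d, hd⟩]
    · simp
    · intro m _ hm
      exact if_neg fun h => hm (Subtype.ext h)
    · simp
  · rw [coeff_eq_zero_of_sum_ne (hq i) hd]
    exact Finset.sum_eq_zero fun m _ => if_neg fun h : m.1 = d => hd (h ▸ m.2)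

/-- The determinant of `N` at the generic sextuple specializes to `det N(q)`. -/
theorem eval_det_generic (R : Expo 4 → Fin 6 → MvPolynomial (Fin 5) ℂ)
    {q : Fin 6 → MvPolynomial (Fin 5) ℂ} (hq : ∀ i, (q i).IsHomogeneous 2) :
    eval (fun m : Fin 6 × Expo 2 => (q m.1).coeff m.2.val)
      (prodMatrix (fun e i => map C (R e i)) genericSextuple).det = (prodMatrix R q).det := by
  rw [RingHom.map_det]
  congr 1
  ext e' e
  have hC : (eval fun m : Fin 6 × Expo 2 => (q m.1).coeff m.2.val).comp C = RingHom.id ℂ := by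
    ext
    simp
  simp only [prodMatrix, RingHom.mapMatrix_apply, Matrix.map_apply, Matrix.of_apply]
  rw [← coeff_map, map_sum]
  simp only [map_mul, map_eval_genericSextuple hq, map_map, hC, map_id]

/-- The set of sextuples of homogeneous quadratic forms `(q₀,…,q₅)` for which the map
`(r₀,…,r₅) ↦ ∑ qᵢ rᵢ` onto quartic forms is surjective is nonempty, and its complement
is contained in the zero locus of a nonzero polynomial function in the coefficients of
the sextuple (indexed by `Fin 6 ×` the monomials of total degree 2). -/
theorem stmt_3 :
    (∃ q : Fin 6 → MvPolynomial (Fin 5) ℂ,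
      (∀ i, (q i).IsHomogeneous 2) ∧ SurjSextuple q) ∧
    ∃ G : MvPolynomial (Fin 6 × {d : Fin 5 →₀ ℕ // ∑ i : Fin 5, d i = 2}) ℂ,
      G ≠ 0 ∧
      ∀ q : Fin 6 → MvPolynomial (Fin 5) ℂ, (∀ i, (q i).IsHomogeneous 2) →
        ¬ SurjSextuple q →
        MvPolynomial.eval (fun m => (q m.1).coeff m.2.val) G = 0 := by
  choose R hR hRe using exists_preimage_monomial
  have hdet : (prodMatrix R specialSextuple).det = 1 := by
    have : prodMatrix R specialSextuple = 1 := by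
      ext e' e
      simp only [prodMatrix, Matrix.of_apply, hRe, coeff_monomial, Matrix.one_apply,
        Subtype.ext_iff, eq_comm]
    rw [this, Matrix.det_one]
  refine ⟨⟨specialSextuple, isHomogeneous_specialSextuple,
    surjSextuple_of_det_ne_zero hR isHomogeneous_specialSextuple (hdet ▸ one_ne_zero)⟩,
    (prodMatrix (fun e i => map C (R e i)) genericSextuple).det, fun h => ?_, fun q hq hns => ?_⟩
  · have := eval_det_generic R isHomogeneous_specialSextuple
    rw [h, map_zero, hdet] at this
    exact zero_ne_one this
  · by_contra hne
    rw [eval_det_generic R hq] at hne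
    exact hns (surjSextuple_of_det_ne_zero hR hq hne)
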